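/- Let w^λ be a maximizer of ℰ over K_λ(D) with λ > 1/|D| and λ ≠ 2Ω. Write w^λ = λ 1_{A^λ} + 2Ω 1_{B^λ} where A^λ = {Gw^λ + (Ω/2)|x|² > μ^λ} and B^λ = {Gw^λ + (Ω/2)|x|² = μ^λ}. Then |B^λ| = 0; consequently w^λ = λ 1_{A^λ} a.e., i.e., every maximizer is a vortex patch. -/

import Mathlib

open MeasureTheory Real Set Filter Topology ENNReal
noncomputable section
abbrev E2 := EuclideanSpace ℝ (Fin 2)
def diskD : Set E2 := Metric.ball 0 1
def greenh (x y : E2) : ℝ := -(1/(2*π)) * Real.log ‖y‖ - (1/(2*π)) * Real.log ‖x - (‖y‖^2)⁻¹ • y‖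
def greenG (x y : E2) : ℝ := -(1/(2*π)) * Real.log ‖x - y‖ - greenh x y
def muD : Measure E2 := volume.restrict diskD
def Kset (lam : ℝ) : Set (E2 → ℝ) :=
  {w | AEMeasurable w muD ∧ (∀ᵐ x ∂muD, 0 ≤ w x ∧ w x ≤ lam) ∧ ∫ x, w x ∂muD = 1}
def Efun (w : E2 → ℝ) : ℝ := (1/2) * ∫ x in diskD, ∫ y in diskD, greenG x y * w x * w y
def calE (Ω : ℝ) (w : E2 → ℝ) : ℝ := Efun w + (Ω/2) * ∫ x in diskD, ‖x‖^2 * w x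
/-- The stream-type function Gw + (Ω/2)|x|². -/
def psiFun (Ω : ℝ) (w : E2 → ℝ) (x : E2) : ℝ :=
  (∫ y in diskD, greenG x y * w y) + (Ω/2) * ‖x‖^2

/-!
If a maximizer `w` took values strictly between `0` and `λ` on a set of positive measure inside a
level set `{Gw + (Ω/2)|x|² = m}`, then `w` could be perturbed there by a small mean-zero `f`. The
first variation `∫ (Gw + (Ω/2)|x|²) f = m ∫ f` vanishes, so the energy changes exactly by
`½ ∬ G(x, y) f(x) f(y)`. This is positive for a suitable `f`: because `G` blows up on the diagonal
and is bounded away from it, one may take a balanced difference of the indicators of the parts of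
the set near two distinct points, whose self-interaction outweighs their mutual interaction. Hence
`w ∈ {0, λ}` a.e. on every level set, and a level set where `w` has another value is null.
-/

section KernelForm

variable {α : Type*} [MeasurableSpace α] {μ : Measure α} {k : α → α → ℝ} {f g : α → ℝ}

/-- The bilinear form `∬ k(x, y) f(x) g(y) dμ(x) dμ(y)` of a kernel `k`, through which the vortex
energy is expanded. It is encoded as one integral over the product space, so that it is additive
as soon as the integrands are integrable. -/
def kernelForm (μ : Measure α) (k : α → α → ℝ) (f g : α → ℝ) : ℝ :=
  ∫ p : α × α, k p.1 p.2 * f p.1 * g p.2 ∂μ.prod μ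

lemma integrable_kernel_mul_mul [IsFiniteMeasure μ]
    (hk : Integrable (fun p : α × α ↦ k p.1 p.2) (μ.prod μ))
    (hf : MemLp f ∞ μ) (hg : MemLp g ∞ μ) :
    Integrable (fun p : α × α ↦ k p.1 p.2 * f p.1 * g p.2) (μ.prod μ) :=
  (hk.mul_of_top_left (hf.comp_fst μ)).mul_of_top_left (hg.comp_snd μ)

lemma kernelForm_eq_integral_integral [IsFiniteMeasure μ]
    (hk : Integrable (fun p : α × α ↦ k p.1 p.2) (μ.prod μ))
    (hf : MemLp f ∞ μ) (hg : MemLp g ∞ μ) :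
    kernelForm μ k f g = ∫ x, ∫ y, k x y * f x * g y ∂μ ∂μ :=
  integral_prod _ (integrable_kernel_mul_mul hk hf hg)

lemma kernelForm_comm [SFinite μ] (hsymm : ∀ x y, k x y = k y x) (f g : α → ℝ) :
    kernelForm μ k f g = kernelForm μ k g f := by
  unfold kernelForm
  rw [← integral_prod_swap]
  congr 1 with p
  rw [Prod.fst_swap, Prod.snd_swap, hsymm, mul_right_comm]

lemma kernelForm_smul_smul (s t : ℝ) (f g : α → ℝ) :
    kernelForm μ k (s • f) (t • g) = s * t * kernelForm μ k f g := by
  unfold kernelForm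
  rw [← integral_const_mul]
  congr 1 with p
  simp only [Pi.smul_apply, smul_eq_mul]
  ring

lemma kernelForm_add_add [IsFiniteMeasure μ] (hsymm : ∀ x y, k x y = k y x)
    (hk : Integrable (fun p : α × α ↦ k p.1 p.2) (μ.prod μ))
    (hf : MemLp f ∞ μ) (hg : MemLp g ∞ μ) :
    kernelForm μ k (f + g) (f + g) =
      kernelForm μ k f f + 2 * kernelForm μ k g f + kernelForm μ k g g := by
  have hff := integrable_kernel_mul_mul hk hf hf
  have hgf := integrable_kernel_mul_mul hk hg hf
  have hfg := integrable_kernel_mul_mul hk hf hg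
  have hgg := integrable_kernel_mul_mul hk hg hg
  have expand : kernelForm μ k (f + g) (f + g) = kernelForm μ k f f + kernelForm μ k g f +
      (kernelForm μ k f g + kernelForm μ k g g) := by
    unfold kernelForm
    rw [← integral_add hff hgf, ← integral_add hfg hgg,
      ← integral_add (by exact hff.add hgf) (by exact hfg.add hgg)]
    congr 1 with p
    simp only [Pi.add_apply]
    ring
  rw [expand, kernelForm_comm hsymm f g]
  ring

lemma kernelForm_indicator_one {s t : Set α} (hs : MeasurableSet s) (ht : MeasurableSet t) :
    kernelForm μ k (s.indicator 1) (t.indicator 1) = ∫ p in s ×ˢ t, k p.1 p.2 ∂μ.prod μ := by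
  rw [← integral_indicator (hs.prod ht)]
  refine integral_congr_ae (.of_forall fun p ↦ ?_)
  by_cases h₁ : p.1 ∈ s <;> by_cases h₂ : p.2 ∈ t <;> simp [Set.indicator, h₁, h₂]

lemma const_mul_le_kernelForm_indicator [IsFiniteMeasure μ] {s t : Set α} {c : ℝ}
    (hk : Integrable (fun p : α × α ↦ k p.1 p.2) (μ.prod μ))
    (hs : MeasurableSet s) (ht : MeasurableSet t)
    (hc : ∀ᵐ p ∂μ.prod μ, p ∈ s ×ˢ t → c ≤ k p.1 p.2) :
    c * (μ.real s * μ.real t) ≤ kernelForm μ k (s.indicator 1) (t.indicator 1) := by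
  rw [kernelForm_indicator_one hs ht, ← measureReal_prod_prod, mul_comm, ← smul_eq_mul,
    ← setIntegral_const]
  exact setIntegral_mono_on_ae (integrable_const c).integrableOn hk.integrableOn (hs.prod ht) hc

lemma kernelForm_indicator_le_const_mul [IsFiniteMeasure μ] {s t : Set α} {c : ℝ}
    (hk : Integrable (fun p : α × α ↦ k p.1 p.2) (μ.prod μ))
    (hs : MeasurableSet s) (ht : MeasurableSet t)
    (hc : ∀ᵐ p ∂μ.prod μ, p ∈ s ×ˢ t → k p.1 p.2 ≤ c) :
    kernelForm μ k (s.indicator 1) (t.indicator 1) ≤ c * (μ.real s * μ.real t) := by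
  rw [kernelForm_indicator_one hs ht, ← measureReal_prod_prod, mul_comm c, ← smul_eq_mul,
    ← setIntegral_const]
  exact setIntegral_mono_on_ae hk.integrableOn (integrable_const c).integrableOn (hs.prod ht) hc

lemma memLp_top_indicator_one {s : Set α} (hs : MeasurableSet s) :
    MemLp (s.indicator (1 : α → ℝ)) ∞ μ :=
  (memLp_top_const 1).indicator hs

lemma kernelForm_smul_indicator_sub_smul_indicator_pos [IsFiniteMeasure μ] {C C' : Set α}
    {L M s t : ℝ} (hsymm : ∀ x y, k x y = k y x)
    (hk : Integrable (fun p : α × α ↦ k p.1 p.2) (μ.prod μ))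
    (hC : MeasurableSet C) (hC' : MeasurableSet C')
    (hCC : ∀ᵐ p ∂μ.prod μ, p ∈ C ×ˢ C → L ≤ k p.1 p.2)
    (hC'C' : ∀ᵐ p ∂μ.prod μ, p ∈ C' ×ˢ C' → L ≤ k p.1 p.2)
    (hC'C : ∀ᵐ p ∂μ.prod μ, p ∈ C' ×ˢ C → k p.1 p.2 ≤ M) (hML : M < L)
    (hst : s * μ.real C = t * μ.real C') (hs : 0 < s) (ht : 0 < t) (hC0 : 0 < μ.real C) :
    0 < kernelForm μ k (s • C.indicator 1 - t • C'.indicator 1)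
      (s • C.indicator 1 - t • C'.indicator 1) := by
  have lower := const_mul_le_kernelForm_indicator hk hC hC hCC
  have lower' := const_mul_le_kernelForm_indicator hk hC' hC' hC'C'
  have upper := kernelForm_indicator_le_const_mul hk hC' hC hC'C
  rw [sub_eq_add_neg, ← neg_smul,
    kernelForm_add_add hsymm hk ((memLp_top_indicator_one hC).const_smul s)
      ((memLp_top_indicator_one hC').const_smul (-t)), kernelForm_smul_smul, kernelForm_smul_smul,
    kernelForm_smul_smul]
  calc 0 < 2 * (s * μ.real C) ^ 2 * (L - M) := mul_pos (by positivity) (sub_pos.2 hML)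
    _ = s * s * (L * (μ.real C * μ.real C)) - 2 * (s * t) * (M * (μ.real C' * μ.real C)) +
        t * t * (L * (μ.real C' * μ.real C')) := by
      linear_combination (L * (s * μ.real C + t * μ.real C') - 2 * M * s * μ.real C) * hst
    _ ≤ s * s * kernelForm μ k (C.indicator 1) (C.indicator 1) -
        2 * (s * t) * kernelForm μ k (C'.indicator 1) (C.indicator 1) +
        t * t * kernelForm μ k (C'.indicator 1) (C'.indicator 1) := by gcongr
    _ = _ := by ring

end KernelForm

section DiagonalSingularity

lemma ae_prod_fst_ne_snd {α : Type*} [MeasurableSpace α] [MeasurableEq α] {μ : Measure α}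
    [SFinite μ] [NullSingletonClass μ] : ∀ᵐ p ∂μ.prod μ, p.1 ≠ p.2 :=
  (Measure.ae_prod_iff_ae_ae measurableSet_diagonal.compl).2 <|
    .of_forall fun x ↦ (μ.ae_ne x).mono fun _ hy ↦ hy.symm

variable {α : Type*} [TopologicalSpace α]

/-- A kernel which, at the points of `s`, is continuous off the diagonal and blows up to `+∞` on
the diagonal. The values on the diagonal itself are irrelevant. Such a kernel makes it energetically
favourable to concentrate mass. -/
structure HasDiagonalSingularityOn (k : α → α → ℝ) (s : Set α) : Prop where
  continuousAt : ∀ x ∈ s, ∀ y ∈ s, x ≠ y → ContinuousAt (fun p : α × α ↦ k p.1 p.2) (x, y)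
  tendsto_atTop : ∀ x ∈ s,
    Tendsto (fun p : α × α ↦ k p.1 p.2) (𝓝[(diagonal α)ᶜ] (x, x)) atTop

lemma HasDiagonalSingularityOn.mono {k : α → α → ℝ} {s t : Set α}
    (hk : HasDiagonalSingularityOn k t) (hst : s ⊆ t) : HasDiagonalSingularityOn k s where
  continuousAt x hx y hy := hk.continuousAt x (hst hx) y (hst hy)
  tendsto_atTop x hx := hk.tendsto_atTop x (hst hx)

lemma HasDiagonalSingularityOn.exists_nhds_le {k : α → α → ℝ} {s : Set α}
    (hk : HasDiagonalSingularityOn k s) {x : α} (hx : x ∈ s) (L : ℝ) :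
    ∃ U ∈ 𝓝 x, ∀ p ∈ U.offDiag, L ≤ k p.1 p.2 := by
  have eventually_le := (hk.tendsto_atTop x hx).eventually_ge_atTop L
  rw [eventually_nhdsWithin_iff, nhds_prod_eq] at eventually_le
  obtain ⟨U, hU, hUL⟩ := mem_prod_self_iff.1 eventually_le
  exact ⟨U, hU, fun p hp ↦ hUL ⟨hp.1, hp.2.1⟩ hp.2.2⟩

lemma HasDiagonalSingularityOn.exists_nhds_gap {k : α → α → ℝ} {s : Set α}
    (hk : HasDiagonalSingularityOn k s) {x y : α} (hx : x ∈ s) (hy : y ∈ s) (hxy : x ≠ y) :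
    ∃ U ∈ 𝓝 x, ∃ V ∈ 𝓝 y, ∃ M L, M < L ∧ (∀ p ∈ U.offDiag, L ≤ k p.1 p.2) ∧
      (∀ p ∈ V.offDiag, L ≤ k p.1 p.2) ∧ ∀ p ∈ V ×ˢ U, k p.1 p.2 ≤ M := by
  obtain ⟨V₁, hV₁, U₁, hU₁, hM⟩ := mem_nhds_prod_iff.1 <|
    (hk.continuousAt y hy x hx hxy.symm).eventually_le_const (lt_add_one (k y x))
  obtain ⟨U₂, hU₂, hUL⟩ := hk.exists_nhds_le hx (k y x + 2)
  obtain ⟨V₂, hV₂, hVL⟩ := hk.exists_nhds_le hy (k y x + 2)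
  exact ⟨U₁ ∩ U₂, inter_mem hU₁ hU₂, V₁ ∩ V₂, inter_mem hV₁ hV₂, k y x + 1, k y x + 2,
    by linarith, fun p hp ↦ hUL p (offDiag_mono inter_subset_right hp),
    fun p hp ↦ hVL p (offDiag_mono inter_subset_right hp), fun p hp ↦ hM ⟨hp.1.1, hp.2.1⟩⟩

variable [MeasurableSpace α] {μ : Measure α} {B : Set α}

lemma exists_ne_forall_nhds_measure_inter_pos [SecondCountableTopology α] [NullSingletonClass μ]
    (hB : μ B ≠ 0) : ∃ x ∈ B, ∃ y ∈ B, x ≠ y ∧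
      (∀ U ∈ 𝓝 x, 0 < μ (B ∩ U)) ∧ ∀ V ∈ 𝓝 y, 0 < μ (B ∩ V) := by
  obtain ⟨x, hx, hxB⟩ := exists_mem_forall_mem_nhdsWithin_pos_measure hB
  have hBx : μ (B \ {x}) ≠ 0 := by rwa [measure_sdiff_null (measure_singleton x)]
  obtain ⟨y, ⟨hy, hyx⟩, hyB⟩ := exists_mem_forall_mem_nhdsWithin_pos_measure hBx
  refine ⟨x, hx, y, hy, Ne.symm hyx, fun U hU ↦ hxB _ (inter_mem_nhdsWithin B hU),
    fun V hV ↦ (hyB _ (inter_mem_nhdsWithin _ hV)).trans_le ?_⟩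
  exact measure_mono (inter_subset_inter_left V sdiff_subset)

lemma HasDiagonalSingularityOn.exists_subsets_gap [SecondCountableTopology α]
    [OpensMeasurableSpace α] [NullSingletonClass μ] {k : α → α → ℝ}
    (hk : HasDiagonalSingularityOn k B) (hBm : MeasurableSet B) (hB : μ B ≠ 0) :
    ∃ C ⊆ B, ∃ C' ⊆ B, ∃ M L, MeasurableSet C ∧ MeasurableSet C' ∧ 0 < μ C ∧ 0 < μ C' ∧ M < L ∧
      (∀ p ∈ C.offDiag, L ≤ k p.1 p.2) ∧ (∀ p ∈ C'.offDiag, L ≤ k p.1 p.2) ∧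
      ∀ p ∈ C' ×ˢ C, k p.1 p.2 ≤ M := by
  obtain ⟨x, hx, y, hy, hxy, hxB, hyB⟩ := exists_ne_forall_nhds_measure_inter_pos hB
  obtain ⟨U, hU, V, hV, M, L, hML, hUL, hVL, hM⟩ := hk.exists_nhds_gap hx hy hxy
  have hU' : interior U ⊆ U := interior_subset
  have hV' : interior V ⊆ V := interior_subset
  exact ⟨B ∩ interior U, inter_subset_left, B ∩ interior V, inter_subset_left, M, L,
    hBm.inter measurableSet_interior, hBm.inter measurableSet_interior,
    hxB _ (interior_mem_nhds.2 hU), hyB _ (interior_mem_nhds.2 hV), hML,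
    fun p hp ↦ hUL p (offDiag_mono (inter_subset_right.trans hU') hp),
    fun p hp ↦ hVL p (offDiag_mono (inter_subset_right.trans hV') hp),
    fun p hp ↦ hM p ⟨hV' hp.1.2, hU' hp.2.2⟩⟩

lemma HasDiagonalSingularityOn.exists_kernelForm_pos [SecondCountableTopology α]
    [OpensMeasurableSpace α] [MeasurableEq α] [IsFiniteMeasure μ] [NullSingletonClass μ]
    {k : α → α → ℝ} (hk : HasDiagonalSingularityOn k B) (hsymm : ∀ x y, k x y = k y x)
    (hint : Integrable (fun p : α × α ↦ k p.1 p.2) (μ.prod μ))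
    (hBm : MeasurableSet B) (hB : μ B ≠ 0) {ε : ℝ} (hε : 0 < ε) :
    ∃ f : α → ℝ, Measurable f ∧ (∀ x, |f x| ≤ ε) ∧ Function.support f ⊆ B ∧
      ∫ x, f x ∂μ = 0 ∧ 0 < kernelForm μ k f f := by
  obtain ⟨C, hCB, C', hCB', M, L, hC, hC', hC0, hC0', hML, hCC, hCC', hM⟩ :=
    hk.exists_subsets_gap hBm hB
  have ha : 0 < μ.real C := ENNReal.toReal_pos hC0.ne' (measure_ne_top μ C)
  have ha' : 0 < μ.real C' := ENNReal.toReal_pos hC0'.ne' (measure_ne_top μ C')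
  set s := ε * μ.real C' / (μ.real C + μ.real C') with hs
  set t := ε * μ.real C / (μ.real C + μ.real C') with ht
  have hs0 : 0 < s := by positivity
  have ht0 : 0 < t := by positivity
  have hadd : s + t = ε := by rw [hs, ht]; field_simp; ring
  have hbalance : s * μ.real C = t * μ.real C' := by rw [hs, ht]; ring
  have hoff : ∀ A : Set α, (∀ p ∈ A.offDiag, L ≤ k p.1 p.2) →
      ∀ᵐ p ∂μ.prod μ, p ∈ A ×ˢ A → L ≤ k p.1 p.2 := fun A hA ↦
    ae_prod_fst_ne_snd.mono fun p hne hp ↦ hA p ⟨hp.1, hp.2, hne⟩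
  refine ⟨s • C.indicator 1 - t • C'.indicator 1, ?_, fun x ↦ ?_, ?_, ?_,
    kernelForm_smul_indicator_sub_smul_indicator_pos hsymm hint hC hC' (hoff C hCC) (hoff C' hCC')
      (.of_forall hM) hML hbalance hs0 ht0 ha⟩
  · exact ((measurable_one.indicator hC).const_smul s).sub
      ((measurable_one.indicator hC').const_smul t)
  · rw [abs_le]
    by_cases hx : x ∈ C <;> by_cases hx' : x ∈ C' <;>
      simp only [Pi.sub_apply, Pi.smul_apply, indicator_of_mem, indicator_of_notMem, hx, hx',
        Pi.one_apply, smul_eq_mul, not_false_eq_true] <;>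
      constructor <;> linarith
  · refine (Function.support_sub _ _).trans (union_subset ?_ ?_)
    · exact (Function.support_const_smul_subset _ _).trans (support_indicator_subset.trans hCB)
    · exact (Function.support_const_smul_subset _ _).trans (support_indicator_subset.trans hCB')
  · have hI := ((memLp_top_indicator_one (μ := μ) hC).integrable le_top).smul s
    have hI' := ((memLp_top_indicator_one (μ := μ) hC').integrable le_top).smul t
    rw [integral_sub' hI hI']
    simp only [Pi.smul_apply, smul_eq_mul, integral_const_mul, integral_indicator_one hC,
      integral_indicator_one hC']
    linarith

end DiagonalSingularity

section DiskGreen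

variable {F : Type*} [NormedAddCommGroup F]

/-- The Green function of the unit disk with Dirichlet boundary condition, in the closed form
`(1 / 4π) log (1 + (1 - |x|²)(1 - |y|²) / |x - y|²)`, which is manifestly symmetric and nonnegative.
It agrees with `greenG` almost everywhere; at `x = y` it takes the junk value `0`. -/
def diskGreen (x y : F) : ℝ :=
  1 / (4 * π) * Real.log (1 + (1 - ‖x‖ ^ 2) * (1 - ‖y‖ ^ 2) / ‖x - y‖ ^ 2)

lemma diskGreen_comm (x y : F) : diskGreen x y = diskGreen y x := by
  rw [diskGreen, diskGreen, norm_sub_rev, mul_comm (1 - ‖x‖ ^ 2)]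

lemma one_sub_norm_sq_mem_Ioc {x : F} (hx : x ∈ Metric.ball 0 1) : 1 - ‖x‖ ^ 2 ∈ Ioc (0 : ℝ) 1 := by
  have : ‖x‖ < 1 := mem_ball_zero_iff.1 hx
  exact ⟨by nlinarith [norm_nonneg x], by nlinarith [norm_nonneg x]⟩

lemma diskGreen_nonneg {x y : F} (hx : x ∈ Metric.ball 0 1) (hy : y ∈ Metric.ball 0 1) :
    0 ≤ diskGreen x y := by
  have hx' := (one_sub_norm_sq_mem_Ioc hx).1
  have hy' := (one_sub_norm_sq_mem_Ioc hy).1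
  exact mul_nonneg (by positivity) (Real.log_nonneg (le_add_of_nonneg_right (by positivity)))

lemma log_one_add_sq_le {s : ℝ} (hs : 0 ≤ s) : Real.log (1 + s ^ 2) ≤ 2 * s :=
  calc Real.log (1 + s ^ 2) ≤ Real.log ((1 + s) ^ 2) :=
        Real.log_le_log (by positivity) (by nlinarith)
    _ = 2 * Real.log (1 + s) := by rw [Real.log_pow]; norm_num
    _ ≤ 2 * s := by linarith [Real.log_le_sub_one_of_pos (show 0 < 1 + s by positivity)]

lemma diskGreen_le {x y : F} (hx : x ∈ Metric.ball 0 1) (hy : y ∈ Metric.ball 0 1) :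
    diskGreen x y ≤ 1 / (2 * π) * ‖x - y‖⁻¹ := by
  obtain ⟨hx0, hx1⟩ := one_sub_norm_sq_mem_Ioc hx
  obtain ⟨hy0, hy1⟩ := one_sub_norm_sq_mem_Ioc hy
  have hquot : (1 - ‖x‖ ^ 2) * (1 - ‖y‖ ^ 2) / ‖x - y‖ ^ 2 ≤ ‖x - y‖⁻¹ ^ 2 := by
    rw [div_eq_mul_inv, inv_pow]
    exact mul_le_of_le_one_left (by positivity) (mul_le_one₀ hx1 hy0.le hy1)
  calc diskGreen x y ≤ 1 / (4 * π) * Real.log (1 + ‖x - y‖⁻¹ ^ 2) := by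
        unfold diskGreen; gcongr
    _ ≤ 1 / (4 * π) * (2 * ‖x - y‖⁻¹) := by gcongr; exact log_one_add_sq_le (by positivity)
    _ = 1 / (2 * π) * ‖x - y‖⁻¹ := by ring

lemma hasDiagonalSingularityOn_diskGreen :
    HasDiagonalSingularityOn (diskGreen (F := F)) (Metric.ball 0 1) where
  continuousAt x hx y hy hxy := by
    have hx' := (one_sub_norm_sq_mem_Ioc hx).1
    have hy' := (one_sub_norm_sq_mem_Ioc hy).1
    have hne : ‖x - y‖ ≠ 0 := norm_ne_zero_iff.2 (sub_ne_zero.2 hxy)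
    have hquot : ContinuousAt (fun p : F × F ↦
        1 + (1 - ‖p.1‖ ^ 2) * (1 - ‖p.2‖ ^ 2) / ‖p.1 - p.2‖ ^ 2) (x, y) :=
      continuousAt_const.add (.div (by fun_prop) (by fun_prop) (pow_ne_zero 2 hne))
    exact continuousAt_const.mul (hquot.log (by positivity))
  tendsto_atTop x hx := by
    have hx' := (one_sub_norm_sq_mem_Ioc hx).1
    have hnum : Tendsto (fun p : F × F ↦ (1 - ‖p.1‖ ^ 2) * (1 - ‖p.2‖ ^ 2))
        (𝓝[(diagonal F)ᶜ] (x, x)) (𝓝 ((1 - ‖x‖ ^ 2) * (1 - ‖x‖ ^ 2))) :=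
      (Continuous.tendsto (by fun_prop) (x, x)).mono_left nhdsWithin_le_nhds
    have hden : Tendsto (fun p : F × F ↦ ‖p.1 - p.2‖ ^ 2) (𝓝[(diagonal F)ᶜ] (x, x)) (𝓝[>] 0) := by
      refine tendsto_nhdsWithin_iff.2 ⟨?_, eventually_mem_nhdsWithin.mono fun p hp ↦ ?_⟩
      · have : Tendsto (fun p : F × F ↦ ‖p.1 - p.2‖ ^ 2) (𝓝 (x, x)) (𝓝 (‖x - x‖ ^ 2)) :=
          Continuous.tendsto (by fun_prop) (x, x)
        simpa using this.mono_left nhdsWithin_le_nhds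
      · exact pow_pos (norm_sub_pos_iff.2 hp) 2
    have hquot := hnum.pos_mul_atTop (by positivity) hden.inv_tendsto_nhdsGT_zero
    exact (Real.tendsto_log_atTop.comp (tendsto_atTop_add_const_left _ 1 hquot)).const_mul_atTop
      (by positivity)

lemma norm_sub_inv_norm_sq_smul_sq_mul_norm_sq [InnerProductSpace ℝ F] (x : F) {y : F}
    (hy : y ≠ 0) : ‖x - (‖y‖ ^ 2)⁻¹ • y‖ ^ 2 * ‖y‖ ^ 2 =
      ‖x - y‖ ^ 2 + (1 - ‖x‖ ^ 2) * (1 - ‖y‖ ^ 2) := by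
  have : ‖y‖ ≠ 0 := norm_ne_zero_iff.2 hy
  rw [norm_sub_sq_real, norm_sub_sq_real, inner_smul_right, norm_smul, norm_inv, norm_pow,
    norm_norm]
  field_simp
  ring

section Integrable

variable [NormedSpace ℝ F] [FiniteDimensional ℝ F] [MeasurableSpace F] [BorelSpace F]
  {μ : Measure F} [μ.IsAddHaarMeasure]

lemma integrable_indicator_ball_inv_norm (hF : 1 < Module.finrank ℝ F) (r : ℝ) :
    Integrable ((Metric.ball (0 : F) r).indicator fun z ↦ ‖z‖⁻¹) μ := by
  have := Module.nontrivial_of_finrank_pos (R := ℝ) (M := F) (by omega)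
  have radial : (Metric.ball (0 : F) r).indicator (fun z ↦ ‖z‖⁻¹) =
      fun z ↦ (Iio r).indicator (fun t : ℝ ↦ t⁻¹) ‖z‖ := by
    ext z; simp [indicator]
  rw [radial, integrable_fun_norm_addHaar]
  have hmono : IntegrableOn (fun t : ℝ ↦ t ^ (Module.finrank ℝ F - 2)) (Iio r ∩ Ioi 0) :=
    ((continuous_pow _).integrableOn_Icc (a := 0) (b := r)).mono_set
      fun t ht ↦ ⟨(mem_Ioi.1 ht.2).le, (mem_Iio.1 ht.1).le⟩
  refine ((integrableOn_indicator_iff measurableSet_Iio).2 hmono).congr_fun (fun t ht ↦ ?_)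
    measurableSet_Ioi
  have hpow : t ^ (Module.finrank ℝ F - 1) = t ^ (Module.finrank ℝ F - 2) * t := by
    rw [← pow_succ]; congr 1; omega
  by_cases h : t ∈ Iio r <;> simp [h, hpow, (mem_Ioi.1 ht).ne']

lemma integrable_inv_norm_sub (hF : 1 < Module.finrank ℝ F) (r : ℝ) :
    Integrable (fun p : F × F ↦ ‖p.1 - p.2‖⁻¹)
      ((μ.restrict (Metric.ball 0 r)).prod (μ.restrict (Metric.ball 0 r))) := by
  have hball : MeasurableSet (Metric.ball (0 : F) r) := measurableSet_ball
  have hone : Integrable ((Metric.ball (0 : F) r).indicator (1 : F → ℝ)) μ :=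
    (integrable_indicator_iff hball).2 (integrableOn_const measure_ball_lt_top.ne)
  have convolution := (hone.convolution_integrand (ContinuousLinearMap.mul ℝ ℝ)
    (integrable_indicator_ball_inv_norm (μ := μ) hF (r + r))).integrableOn
      (s := Metric.ball 0 r ×ˢ Metric.ball 0 r)
  rw [Measure.prod_restrict]
  refine convolution.congr_fun (fun p hp ↦ ?_) (hball.prod hball)
  have hsub : p.1 - p.2 ∈ Metric.ball (0 : F) (r + r) := by
    rw [mem_ball_zero_iff]
    exact (norm_sub_le _ _).trans_lt
      (add_lt_add (mem_ball_zero_iff.1 hp.1) (mem_ball_zero_iff.1 hp.2))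
  simp [indicator_of_mem hp.2, indicator_of_mem hsub]

lemma integrable_diskGreen (hF : 1 < Module.finrank ℝ F) :
    Integrable (fun p : F × F ↦ diskGreen p.1 p.2)
      ((μ.restrict (Metric.ball 0 1)).prod (μ.restrict (Metric.ball 0 1))) := by
  have hmeas : Measurable fun p : F × F ↦ diskGreen p.1 p.2 := by
    have := FiniteDimensional.proper_real F
    unfold diskGreen
    fun_prop
  refine ((integrable_inv_norm_sub hF 1).const_mul (1 / (2 * π))).mono'
    hmeas.aestronglyMeasurable ?_
  rw [Measure.prod_restrict]
  filter_upwards [ae_restrict_mem (measurableSet_ball.prod measurableSet_ball)] with p hp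
  rw [Real.norm_of_nonneg (diskGreen_nonneg hp.1 hp.2)]
  exact diskGreen_le hp.1 hp.2

end Integrable

end DiskGreen

instance : IsFiniteMeasure muD := isFiniteMeasure_restrict.2 measure_ball_lt_top.ne

instance : NullSingletonClass muD := inferInstanceAs (NullSingletonClass (volume.restrict diskD))

lemma ae_mem_diskD : ∀ᵐ x ∂muD, x ∈ diskD := ae_restrict_mem measurableSet_ball

lemma integrable_diskGreen_muD :
    Integrable (fun p : E2 × E2 ↦ diskGreen p.1 p.2) (muD.prod muD) :=
  integrable_diskGreen (by simp)

lemma greenG_eq_diskGreen {x y : E2} (hx : x ∈ diskD) (hy : y ∈ diskD) (hy0 : y ≠ 0)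
    (hxy : x ≠ y) : greenG x y = diskGreen x y := by
  have hx' := (one_sub_norm_sq_mem_Ioc hx).1
  have hy' := (one_sub_norm_sq_mem_Ioc hy).1
  have hyn : 0 < ‖y‖ := norm_pos_iff.2 hy0
  have hd : 0 < ‖x - y‖ := norm_sub_pos_iff.2 hxy
  have himage := norm_sub_inv_norm_sq_smul_sq_mul_norm_sq x hy0
  have hz : ‖x - (‖y‖ ^ 2)⁻¹ • y‖ ≠ 0 := by
    intro h
    rw [h] at himage
    have : 0 < ‖x - y‖ ^ 2 + (1 - ‖x‖ ^ 2) * (1 - ‖y‖ ^ 2) := by positivity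
    linarith
  have hquot : 1 + (1 - ‖x‖ ^ 2) * (1 - ‖y‖ ^ 2) / ‖x - y‖ ^ 2 =
      (‖x - (‖y‖ ^ 2)⁻¹ • y‖ * ‖y‖ / ‖x - y‖) ^ 2 := by
    rw [div_pow, mul_pow, himage]; field_simp
  rw [diskGreen, hquot, Real.log_pow, Real.log_div (mul_ne_zero hz hyn.ne') hd.ne',
    Real.log_mul hz hyn.ne', greenG, greenh]
  push_cast
  ring

lemma ae_greenG_eq_diskGreen {x : E2} (hx : x ∈ diskD) :
    ∀ᵐ y ∂muD, greenG x y = diskGreen x y := by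
  filter_upwards [ae_mem_diskD, muD.ae_ne 0, muD.ae_ne x] with y hy hy0 hyx
  exact greenG_eq_diskGreen hx hy hy0 hyx.symm

lemma psiFun_eq_integral_diskGreen (Ω : ℝ) (w : E2 → ℝ) {x : E2} (hx : x ∈ diskD) :
    psiFun Ω w x = (∫ y, diskGreen x y * w y ∂muD) + Ω / 2 * ‖x‖ ^ 2 := by
  have : ∫ y, greenG x y * w y ∂muD = ∫ y, diskGreen x y * w y ∂muD :=
    integral_congr_ae ((ae_greenG_eq_diskGreen hx).mono fun y hy ↦ by simp only [hy])
  rw [← this]; rfl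

lemma Efun_eq_kernelForm {w : E2 → ℝ} (hw : MemLp w ∞ muD) :
    Efun w = 1 / 2 * kernelForm muD diskGreen w w := by
  rw [kernelForm_eq_integral_integral integrable_diskGreen_muD hw hw]
  refine congrArg (1 / 2 * ·) (integral_congr_ae ?_)
  filter_upwards [ae_mem_diskD] with x hx
  exact integral_congr_ae ((ae_greenG_eq_diskGreen hx).mono fun y hy ↦ by simp only [hy])

lemma aemeasurable_psiFun (Ω : ℝ) {w : E2 → ℝ} (hw : MemLp w ∞ muD) :
    AEMeasurable (psiFun Ω w) muD := by
  have hGw : Integrable (fun x ↦ ∫ y, diskGreen x y * w y ∂muD) muD := by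
    simpa only [Pi.one_apply, mul_one] using
      (integrable_kernel_mul_mul integrable_diskGreen_muD (memLp_top_const 1) hw).integral_prod_left
  refine (hGw.aemeasurable.add (g := fun x ↦ Ω / 2 * ‖x‖ ^ 2) (by fun_prop)).congr ?_
  filter_upwards [ae_mem_diskD] with x hx
  exact (psiFun_eq_integral_diskGreen Ω w hx).symm

lemma integrable_norm_sq_mul {w : E2 → ℝ} (hw : MemLp w ∞ muD) :
    Integrable (fun x ↦ ‖x‖ ^ 2 * w x) muD := by
  refine (hw.integrable le_top).bdd_mul (c := 1) (by fun_prop) ?_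
  filter_upwards [ae_mem_diskD] with x hx
  rw [Real.norm_of_nonneg (by positivity)]
  linarith [(one_sub_norm_sq_mem_Ioc hx).1]

lemma integral_psiFun_mul (Ω : ℝ) {w f : E2 → ℝ} (hw : MemLp w ∞ muD) (hf : MemLp f ∞ muD) :
    ∫ x, psiFun Ω w x * f x ∂muD =
      kernelForm muD diskGreen f w + Ω / 2 * ∫ x, ‖x‖ ^ 2 * f x ∂muD := by
  have hGwf := (integrable_kernel_mul_mul integrable_diskGreen_muD hf hw).integral_prod_left
  rw [kernelForm_eq_integral_integral integrable_diskGreen_muD hf hw, ← integral_const_mul,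
    ← integral_add hGwf ((integrable_norm_sq_mul hf).const_mul _)]
  refine integral_congr_ae ?_
  filter_upwards [ae_mem_diskD] with x hx
  simp only [psiFun_eq_integral_diskGreen Ω w hx, mul_right_comm _ (f x), integral_mul_const]
  ring

lemma calE_add (Ω : ℝ) {w f : E2 → ℝ} (hw : MemLp w ∞ muD) (hf : MemLp f ∞ muD) :
    calE Ω (w + f) =
      calE Ω w + ∫ x, psiFun Ω w x * f x ∂muD + 1 / 2 * kernelForm muD diskGreen f f := by
  have hmoment : ∫ x, ‖x‖ ^ 2 * (w + f) x ∂muD =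
      ∫ x, ‖x‖ ^ 2 * w x ∂muD + ∫ x, ‖x‖ ^ 2 * f x ∂muD := by
    simp only [Pi.add_apply, mul_add]
    exact integral_add (integrable_norm_sq_mul hw) (integrable_norm_sq_mul hf)
  have hcalE (u : E2 → ℝ) : calE Ω u = Efun u + Ω / 2 * ∫ x, ‖x‖ ^ 2 * u x ∂muD := rfl
  rw [hcalE, hcalE, Efun_eq_kernelForm (hw.add hf), Efun_eq_kernelForm hw, hmoment,
    kernelForm_add_add diskGreen_comm integrable_diskGreen_muD hw hf, integral_psiFun_mul Ω hw hf]
  ring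

lemma memLp_top_of_mem_Kset {lam : ℝ} {w : E2 → ℝ} (hw : w ∈ Kset lam) : MemLp w ∞ muD := by
  refine memLp_top_of_bound hw.1.aestronglyMeasurable lam (hw.2.1.mono fun x hx ↦ ?_)
  rw [Real.norm_of_nonneg hx.1]
  exact hx.2

lemma add_mem_Kset {lam : ℝ} {w f : E2 → ℝ} (hw : w ∈ Kset lam) (hf : Integrable f muD)
    (hfw : ∀ᵐ x ∂muD, |f x| ≤ min (w x) (lam - w x)) (hf0 : ∫ x, f x ∂muD = 0) :
    w + f ∈ Kset lam := by
  refine ⟨hw.1.add hf.aemeasurable, hfw.mono fun x hx ↦ ?_, ?_⟩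
  · obtain ⟨hlower, hupper⟩ := le_min_iff.1 hx
    rw [Pi.add_apply]
    exact ⟨by linarith [neg_le_of_abs_le hlower], by linarith [le_of_abs_le hupper]⟩
  · rw [integral_add' ((memLp_top_of_mem_Kset hw).integrable le_top) hf, hw.2.2, hf0, add_zero]

section Maximizer

variable {Ω lam : ℝ} {w : E2 → ℝ}

lemma measure_psiFun_eq_inter_mem_Icc_eq_zero {a b : ℝ} (ha : 0 < a) (hb : b < lam)
    (hw : w ∈ Kset lam) (hmax : ∀ v ∈ Kset lam, calE Ω v ≤ calE Ω w) (m : ℝ) :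
    muD {x | psiFun Ω w x = m ∧ w x ∈ Icc a b} = 0 := by
  by_contra hpos
  have hwLp := memLp_top_of_mem_Kset hw
  have hnull : NullMeasurableSet {x | psiFun Ω w x = m ∧ w x ∈ Icc a b} muD :=
    ((aemeasurable_psiFun Ω hwLp).nullMeasurable (measurableSet_singleton m)).inter
      (hw.1.nullMeasurable measurableSet_Icc)
  obtain ⟨B, hBsub, hBm, hB⟩ := hnull.exists_measurable_subset_ae_eq
  have hBpos : muD (B ∩ diskD) ≠ 0 := by
    rwa [measure_inter_conull (t := diskD) ae_mem_diskD, measure_congr hB]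
  obtain ⟨f, hfm, hfbound, hfB, hf0, hfpos⟩ :=
    (hasDiagonalSingularityOn_diskGreen.mono inter_subset_right).exists_kernelForm_pos
      diskGreen_comm integrable_diskGreen_muD (hBm.inter measurableSet_ball) hBpos
      (lt_min ha (sub_pos.2 hb))
  have hlevel : ∫ x, psiFun Ω w x * f x ∂muD = 0 := by
    have (x : E2) : psiFun Ω w x * f x = m * f x := by
      by_cases hfx : f x = 0
      · simp only [hfx, mul_zero]
      · rw [(hBsub (hfB hfx).1).1]
    simp only [this, integral_const_mul, hf0, mul_zero]
  have hfw : ∀ᵐ x ∂muD, |f x| ≤ min (w x) (lam - w x) := by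
    filter_upwards [hw.2.1] with x hx
    by_cases hfx : f x = 0
    · simpa only [hfx, abs_zero, le_min_iff, sub_nonneg] using hx
    · obtain ⟨hax, hxb⟩ := (hBsub (hfB hfx).1).2
      exact (hfbound x).trans (min_le_min hax (by linarith))
  have hfLp : MemLp f ∞ muD := memLp_top_of_bound hfm.aestronglyMeasurable _ (.of_forall hfbound)
  have hadm : w + f ∈ Kset lam := add_mem_Kset hw (hfLp.integrable le_top) hfw hf0
  have hgain := calE_add Ω hwLp hfLp
  linarith [hmax _ hadm]

lemma ae_psiFun_eq_imp_eq_zero_or_eq (hw : w ∈ Kset lam)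
    (hmax : ∀ v ∈ Kset lam, calE Ω v ≤ calE Ω w) (m : ℝ) :
    ∀ᵐ x ∂muD, psiFun Ω w x = m → w x = 0 ∨ w x = lam := by
  have hnull : ∀ᵐ x ∂muD, ∀ n : ℕ, ¬ (psiFun Ω w x = m ∧
      w x ∈ Icc (1 / (n + 1 : ℝ)) (lam - 1 / (n + 1 : ℝ))) :=
    ae_all_iff.2 fun n ↦ ae_iff.2 <| by
      simpa only [not_not] using measure_psiFun_eq_inter_mem_Icc_eq_zero (by positivity)
        (sub_lt_self _ (by positivity)) hw hmax m
  filter_upwards [hnull, hw.2.1] with x hx hbound hm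
  by_contra! hne
  have hpos : 0 < min (w x) (lam - w x) :=
    lt_min (hbound.1.lt_of_ne' hne.1) (sub_pos.2 (hbound.2.lt_of_ne hne.2))
  obtain ⟨n, hn⟩ := exists_nat_one_div_lt hpos
  obtain ⟨h₁, h₂⟩ := lt_min_iff.1 hn
  exact hx n ⟨hm, h₁.le, by linarith⟩

end Maximizer

theorem stmt8_general (Ω lam c : ℝ) (hc : c ≠ 0) (hne : lam ≠ c)
    (wlam : E2 → ℝ) (hmem : wlam ∈ Kset lam)
    (hmax : ∀ v ∈ Kset lam, calE Ω v ≤ calE Ω wlam)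
    (mulam : ℝ)
    (hstruct : wlam =ᵐ[muD] fun x =>
      lam * Set.indicator {x ∈ diskD | mulam < psiFun Ω wlam x} (fun _ => (1:ℝ)) x +
      c * Set.indicator {x ∈ diskD | psiFun Ω wlam x = mulam} (fun _ => (1:ℝ)) x) :
    volume {x ∈ diskD | psiFun Ω wlam x = mulam} = 0 ∧
    wlam =ᵐ[muD] fun x =>
      lam * Set.indicator {x ∈ diskD | mulam < psiFun Ω wlam x} (fun _ => (1:ℝ)) x := by
  set A := {x ∈ diskD | mulam < psiFun Ω wlam x}
  set B := {x ∈ diskD | psiFun Ω wlam x = mulam}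
  have hB : ∀ᵐ x ∂muD, x ∉ B := by
    filter_upwards [hstruct, ae_psiFun_eq_imp_eq_zero_or_eq hmem hmax mulam] with x hx hbang hxB
    have hxA : x ∉ A := fun h ↦ h.2.ne' hxB.2
    have hwx : wlam x = c := by simpa only [indicator_of_mem hxB, indicator_of_notMem hxA,
      mul_zero, mul_one, zero_add] using hx
    rcases hbang hxB.2 with h | h
    · exact hc (hwx.symm.trans h)
    · exact hne (h.symm.trans hwx)
  refine ⟨?_, ?_⟩
  · rw [← Measure.restrict_eq_self volume (sep_subset diskD _)]
    exact measure_eq_zero_iff_ae_notMem.2 hB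
  · filter_upwards [hstruct, hB] with x hx hxB
    rw [hx, indicator_of_notMem hxB, mul_zero, add_zero]

theorem stmt8 (Ω lam : ℝ) (hΩ : 0 < Ω) (hlam : 1/π < lam) (hne : lam ≠ 2*Ω)
    (wlam : E2 → ℝ) (hmem : wlam ∈ Kset lam)
    (hmax : ∀ v ∈ Kset lam, calE Ω v ≤ calE Ω wlam)
    (mulam : ℝ)
    (hstruct : wlam =ᵐ[muD] fun x =>
      lam * Set.indicator {x ∈ diskD | mulam < psiFun Ω wlam x} (fun _ => (1:ℝ)) x +
      2*Ω * Set.indicator {x ∈ diskD | psiFun Ω wlam x = mulam} (fun _ => (1:ℝ)) x) :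
    volume {x ∈ diskD | psiFun Ω wlam x = mulam} = 0 ∧
    wlam =ᵐ[muD] fun x =>
      lam * Set.indicator {x ∈ diskD | mulam < psiFun Ω wlam x} (fun _ => (1:ℝ)) x :=
  stmt8_general Ω lam (2 * Ω) (by positivity) hne wlam hmem hmax mulam hstruct
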